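/- Let n ≥ 2 and α > 1, and let z₀ = (1/3, 0, …, 0) ∈ Ω_α. There exists a constant C(α) such that for all integers j, m ≥ 1, with ℓ = ⌊log₂ m⌋ + 1, every point z ∈ S_{j,m} satisfies k(z, z₀; Ω_α) ≤ C(α)·(1 + ℓ)·2^{(α−1)j}. -/

import Mathlib

open MeasureTheory Metric Set
open scoped ENNReal

/-- The quasihyperbolic distance `k(z, z₀; Ω)`: the infimum, over all Lipschitz curves
`γ : [0,1] → Ω` joining `z` to `z₀`, of `∫ ‖γ'(t)‖ / d(γ(t), ∂Ω) dt`. -/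
noncomputable def qhDist {n : ℕ} (Ω : Set (EuclideanSpace ℝ (Fin n)))
    (z z₀ : EuclideanSpace ℝ (Fin n)) : ℝ :=
  sInf {L : ℝ | ∃ γ : ℝ → EuclideanSpace ℝ (Fin n),
    (∃ K : NNReal, LipschitzWith K γ) ∧ γ 0 = z ∧ γ 1 = z₀ ∧
    (∀ t ∈ Set.Icc (0:ℝ) 1, γ t ∈ Ω) ∧
    L = ∫ t in (0:ℝ)..1, ‖deriv γ t‖ / Metric.infDist (γ t) (frontier Ω)}

/-- The distance of `z` from the first coordinate axis. -/
noncomputable def radial {n : ℕ} [NeZero n] (z : EuclideanSpace ℝ (Fin n)) : ℝ :=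
  Real.sqrt (∑ i ∈ Finset.univ.erase (0 : Fin n), z i ^ 2)

/-- The cusp domain `Ω_α = {0 < x < 1, |y| < x^α} ⊆ ℝⁿ`. -/
noncomputable def cuspDomain (n : ℕ) [NeZero n] (α : ℝ) : Set (EuclideanSpace ℝ (Fin n)) :=
  {z | 0 < z 0 ∧ z 0 < 1 ∧ radial z < (z 0) ^ α}

/-- The set `S_{j,m}` of the generalized Whitney subdivision of the cusp, where
`ℓ = ⌊log₂ m⌋ + 1`. -/
noncomputable def cuspCell (n : ℕ) [NeZero n] (α : ℝ) (j m : ℕ) :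
    Set (EuclideanSpace ℝ (Fin n)) :=
  let ℓ := Nat.log 2 m + 1
  {z | (m:ℝ)/2^(j+ℓ) ≤ z 0 ∧ z 0 ≤ (m+1:ℝ)/2^(j+ℓ) ∧
    (1 - 1/2^(ℓ-1)) * (z 0) ^ α ≤ radial z ∧ radial z ≤ (1 - 1/2^ℓ) * (z 0) ^ α}

/-- The projection off the first axis. -/
noncomputable def offAxis {n : ℕ} [NeZero n] (z : EuclideanSpace ℝ (Fin n)) :
    EuclideanSpace ℝ (Fin n) := z - EuclideanSpace.single (0 : Fin n) (z 0)

lemma offAxis_zero {n : ℕ} [NeZero n] (z : EuclideanSpace ℝ (Fin n)) : offAxis z 0 = 0 := by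
  simp [offAxis]

lemma offAxis_ne {n : ℕ} [NeZero n] (z : EuclideanSpace ℝ (Fin n)) {i : Fin n} (hi : i ≠ 0) :
    offAxis z i = z i := by
  simp [offAxis, hi]

lemma radial_eq_norm {n : ℕ} [NeZero n] (z : EuclideanSpace ℝ (Fin n)) :
    radial z = ‖offAxis z‖ := by
  rw [EuclideanSpace.norm_eq, radial, ← Finset.add_sum_erase _ _ (Finset.mem_univ (0 : Fin n)),
    offAxis_zero]
  congr 1
  simp only [norm_zero, ne_eq, OfNat.ofNat_ne_zero, not_false_eq_true, zero_pow, zero_add]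
  refine Finset.sum_congr rfl fun i hi => ?_
  rw [offAxis_ne z (Finset.ne_of_mem_erase hi), Real.norm_eq_abs, sq_abs]

lemma radial_le_norm {n : ℕ} [NeZero n] (z : EuclideanSpace ℝ (Fin n)) :
    radial z ≤ ‖z‖ := by
  rw [EuclideanSpace.norm_eq, radial]
  apply Real.sqrt_le_sqrt
  rw [← Finset.add_sum_erase _ _ (Finset.mem_univ (0 : Fin n))]
  simp only [Real.norm_eq_abs, sq_abs]
  nlinarith [sq_nonneg (z 0)]

lemma radial_nonneg {n : ℕ} [NeZero n] (z : EuclideanSpace ℝ (Fin n)) : 0 ≤ radial z :=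
  Real.sqrt_nonneg _

lemma radial_le_add {n : ℕ} [NeZero n] (w z : EuclideanSpace ℝ (Fin n)) :
    radial w ≤ radial z + ‖w - z‖ := by
  have h : offAxis w = offAxis z + offAxis (w - z) := by
    ext i
    by_cases hi : i = 0
    · subst hi; simp [offAxis_zero]
    · simp [offAxis_ne _ hi]
  calc radial w = ‖offAxis z + offAxis (w - z)‖ := by rw [radial_eq_norm, h]
    _ ≤ ‖offAxis z‖ + ‖offAxis (w - z)‖ := norm_add_le _ _
    _ ≤ _ := by
      rw [← radial_eq_norm, ← radial_eq_norm]
      linarith [radial_le_norm (w - z)]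

lemma ball_subset_cusp {n : ℕ} [NeZero n] {α : ℝ} (hα : 1 < α)
    (z : EuclideanSpace ℝ (Fin n)) (h0 : 0 < z 0) (h1 : z 0 ≤ 1 / 2) :
    ball z ((z 0 ^ α - radial z) / (1 + α)) ⊆ cuspDomain n α := by
  intro w hw
  set x := z 0 with hx
  set r := radial z with hr
  have hr0 : 0 ≤ r := radial_nonneg z
  rw [mem_ball, dist_eq_norm, lt_div_iff₀ (by linarith)] at hw
  set ρ := ‖w - z‖ with hρ
  have hρ0 : 0 ≤ ρ := norm_nonneg _
  have hxa : x ^ α ≤ x := by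
    simpa using Real.rpow_le_rpow_of_exponent_ge h0 (by linarith) hα.le
  have hρx : 2 * ρ < x := by nlinarith
  have hc : |w 0 - x| ≤ ρ := by
    have := PiLp.norm_apply_le (w - z) 0
    simpa using this
  have hc1 := (abs_le.1 hc).1
  have hc2 := (abs_le.1 hc).2
  refine ⟨by linarith, by linarith, ?_⟩
  have hb : 1 + α * (-(ρ / x)) ≤ (1 + -(ρ / x)) ^ α := by
    apply one_add_mul_self_le_rpow_one_add _ hα.le
    have : ρ / x ≤ 1 := by rw [div_le_one h0]; linarith
    linarith
  have hρx1 : 0 ≤ 1 + -(ρ / x) := by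
    have : ρ / x ≤ 1 := by rw [div_le_one h0]; linarith
    linarith
  have h2 : (x - ρ) ^ α = x ^ α * (1 + -(ρ / x)) ^ α := by
    rw [← Real.mul_rpow h0.le hρx1]
    congr 1
    field_simp
    ring
  have h3 : (x - ρ) ^ α ≤ (w 0) ^ α :=
    Real.rpow_le_rpow (by linarith) (by linarith) (by linarith)
  have hxp : 0 < x ^ α := Real.rpow_pos_of_pos h0 _
  have h4 : x ^ α * (1 + α * (-(ρ / x))) ≤ (x - ρ) ^ α := by
    rw [h2]; exact mul_le_mul_of_nonneg_left hb hxp.le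
  have h5 : x ^ α * (ρ / x) ≤ ρ := by
    rw [mul_div_assoc', div_le_iff₀ h0]
    nlinarith
  have h6 := radial_le_add w z
  nlinarith

lemma div_infDist_le {n : ℕ} [NeZero n] {α : ℝ} (hα : 1 < α)
    (z : EuclideanSpace ℝ (Fin n)) (h0 : 0 < z 0) (h1 : z 0 ≤ 1 / 2)
    (h2 : radial z < z 0 ^ α) (v : ℝ) (hv : 0 ≤ v) :
    v / infDist z (frontier (cuspDomain n α)) ≤ (1 + α) * v / (z 0 ^ α - radial z) := by
  have hpos : 0 < z 0 ^ α - radial z := by linarith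
  rcases (frontier (cuspDomain n α)).eq_empty_or_nonempty with he | hne
  · rw [he, infDist_empty, div_zero]; positivity
  · have hle : (z 0 ^ α - radial z) / (1 + α) ≤ infDist z (frontier (cuspDomain n α)) := by
      rw [le_infDist hne]
      intro w hw
      by_contra hlt
      push Not at hlt
      have hwb : w ∈ ball z ((z 0 ^ α - radial z) / (1 + α)) := by
        rw [mem_ball, dist_comm]; exact hlt
      exact hw.2 (interior_maximal (ball_subset_cusp hα z h0 h1) isOpen_ball hwb)
    calc v / infDist z (frontier (cuspDomain n α))
        ≤ v / ((z 0 ^ α - radial z) / (1 + α)) := by gcongr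
      _ = _ := by field_simp

lemma offAxis_add {n : ℕ} [NeZero n] (z : EuclideanSpace ℝ (Fin n)) (X s : ℝ) :
    offAxis (X • EuclideanSpace.single (0 : Fin n) (1 : ℝ) + s • offAxis z) = s • offAxis z := by
  ext i
  by_cases hi : i = 0
  · subst hi; simp [offAxis_zero]
  · simp [offAxis_ne _ hi, hi]

lemma pt_zero {n : ℕ} [NeZero n] (z : EuclideanSpace ℝ (Fin n)) (X s : ℝ) :
    (X • EuclideanSpace.single (0 : Fin n) (1 : ℝ) + s • offAxis z) 0 = X := by
  simp [offAxis_zero]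

lemma pt_radial {n : ℕ} [NeZero n] (z : EuclideanSpace ℝ (Fin n)) (X s : ℝ) (hs : 0 ≤ s) :
    radial (X • EuclideanSpace.single (0 : Fin n) (1 : ℝ) + s • offAxis z) = s * radial z := by
  rw [radial_eq_norm, offAxis_add, norm_smul, Real.norm_eq_abs, abs_of_nonneg hs, radial_eq_norm]

lemma integral_le_of_deriv_bound {f F g : ℝ → ℝ} {a b : ℝ} (hab : a ≤ b)
    (hF : ∀ t ∈ Icc a b, HasDerivAt F (g t) t) (hg : ContinuousOn g (Icc a b))
    (hf0 : ∀ t, 0 ≤ f t) (hfg : ∀ t ∈ Ioo a b, f t ≤ g t) :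
    ∫ t in a..b, f t ≤ F b - F a := by
  have hgi : IntervalIntegrable g volume a b := by
    apply ContinuousOn.intervalIntegrable
    rwa [uIcc_of_le hab]
  rw [← intervalIntegral.integral_eq_sub_of_hasDerivAt
    (fun t ht => hF t (by rwa [uIcc_of_le hab] at ht)) hgi]
  refine le_trans (Real.le_norm_self _) ?_
  refine intervalIntegral.norm_integral_le_of_norm_le hab ?_ hgi
  have hb : ∀ᵐ t : ℝ, t ≠ b := by
    simp [ae_iff]
  filter_upwards [hb] with t ht hmem
  rw [Real.norm_eq_abs, abs_of_nonneg (hf0 t)]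
  exact hfg t ⟨hmem.1, lt_of_le_of_ne hmem.2 ht⟩

/-- Bound along the two-piece curve. -/
lemma qhDist_le {n : ℕ} [NeZero n] {α : ℝ} (hα : 1 < α)
    (z : EuclideanSpace ℝ (Fin n)) (h0 : 0 < z 0) (h1 : z 0 ≤ 1 / 2)
    (h2 : radial z < z 0 ^ α) :
    qhDist (cuspDomain n α) z (EuclideanSpace.single (0 : Fin n) (1/3 : ℝ)) ≤
      (1 + α) * (Real.log (z 0 ^ α) - Real.log (z 0 ^ α - radial z)) +
      (1 + α) / (α - 1) * ((z 0) ^ (1 - α) + (1/3 : ℝ) ^ (1 - α)) := by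
  set x := z 0 with hx
  set r := radial z with hr
  have hr0 : 0 ≤ r := radial_nonneg z
  have hxp : 0 < x ^ α := Real.rpow_pos_of_pos h0 _
  set e : EuclideanSpace ℝ (Fin n) := EuclideanSpace.single (0 : Fin n) (1 : ℝ) with he
  set c1 : ℝ → ℝ := fun t => max 0 (min 1 (2 * t)) with hc1
  set c2 : ℝ → ℝ := fun t => max 0 (min 1 (2 * t - 1)) with hc2
  set γ : ℝ → EuclideanSpace ℝ (Fin n) :=
    fun t => (x + c2 t * (1/3 - x)) • e + (1 - c1 t) • offAxis z with hγ
  have hlip1 : ∀ s t, |c1 s - c1 t| ≤ 2 * |s - t| := by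
    intro s t
    calc |c1 s - c1 t| ≤ |min 1 (2 * s) - min 1 (2 * t)| := by
          simpa using abs_max_sub_max_le_abs (min 1 (2*s)) (min 1 (2*t)) 0 |> fun h => by
            simpa [hc1, max_comm] using h
      _ ≤ |2 * s - 2 * t| := by
          have := abs_min_sub_min_le_max (1:ℝ) (2 * s) 1 (2 * t)
          simpa using this
      _ = _ := by rw [← mul_sub, abs_mul]; norm_num
  have hlip2 : ∀ s t, |c2 s - c2 t| ≤ 2 * |s - t| := by
    intro s t
    calc |c2 s - c2 t| ≤ |min 1 (2 * s - 1) - min 1 (2 * t - 1)| := by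
          simpa using abs_max_sub_max_le_abs (min 1 (2*s-1)) (min 1 (2*t-1)) 0 |> fun h => by
            simpa [hc2, max_comm] using h
      _ ≤ |(2 * s - 1) - (2 * t - 1)| := by
          have := abs_min_sub_min_le_max (1:ℝ) (2 * s - 1) 1 (2 * t - 1)
          simpa using this
      _ = _ := by
          rw [show (2 * s - 1) - (2 * t - 1) = 2 * (s - t) by ring, abs_mul]; norm_num
  have hnn1 : ∀ t, 0 ≤ c1 t := fun t => le_max_left _ _
  have hnn2 : ∀ t, 0 ≤ c2 t := fun t => le_max_left _ _
  have hle1 : ∀ t, c1 t ≤ 1 := fun t => max_le zero_le_one (min_le_left _ _)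
  have hle2 : ∀ t, c2 t ≤ 1 := fun t => max_le zero_le_one (min_le_left _ _)
  have hγlip : ∃ K : NNReal, LipschitzWith K γ := by
    refine ⟨⟨2 * |1/3 - x| * ‖e‖ + 2 * ‖offAxis z‖, by positivity⟩,
      LipschitzWith.of_dist_le_mul fun s t => ?_⟩
    rw [dist_eq_norm, Real.dist_eq]
    have : γ s - γ t = ((c2 s - c2 t) * (1/3 - x)) • e + (-(c1 s - c1 t)) • offAxis z := by
      simp only [hγ]; module
    rw [this]
    refine (norm_add_le _ _).trans ?_
    rw [norm_smul, norm_smul, norm_neg, norm_mul, Real.norm_eq_abs, Real.norm_eq_abs,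
      Real.norm_eq_abs]
    change _ ≤ (2 * |1/3 - x| * ‖e‖ + 2 * ‖offAxis z‖) * |s - t|
    have e1 := mul_le_mul_of_nonneg_right (hlip2 s t)
      (mul_nonneg (abs_nonneg (1/3 - x)) (norm_nonneg e))
    have e2 := mul_le_mul_of_nonneg_right (hlip1 s t) (norm_nonneg (offAxis z))
    nlinarith
  have hγ0c : ∀ t, γ t 0 = x + c2 t * (1/3 - x) := fun t => pt_zero z _ _
  have hγr : ∀ t, radial (γ t) = (1 - c1 t) * r := fun t =>
    pt_radial z _ _ (by linarith [hle1 t])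
  have hXpos : ∀ t, 0 < γ t 0 := by
    intro t; rw [hγ0c]
    nlinarith [hnn2 t, hle2 t]
  have hXle : ∀ t, γ t 0 ≤ 1 / 2 := by
    intro t; rw [hγ0c]
    nlinarith [hnn2 t, hle2 t]
  have hfst : ∀ t, t ≤ 1/2 → c2 t = 0 := by
    intro t ht
    exact max_eq_left ((min_le_right _ _).trans (by linarith))
  have hsnd : ∀ t, 1/2 ≤ t → c1 t = 1 := by
    intro t ht
    simp only [hc1]
    rw [min_eq_left (by linarith)]; norm_num
  have hc1v : ∀ t, 0 ≤ t → t ≤ 1/2 → c1 t = 2 * t := by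
    intro t ht ht'
    simp only [hc1]
    rw [min_eq_right (by linarith), max_eq_right (by linarith)]
  have hc2v : ∀ t, 1/2 ≤ t → t ≤ 1 → c2 t = 2 * t - 1 := by
    intro t ht ht'
    simp only [hc2]
    rw [min_eq_right (by linarith), max_eq_right (by linarith)]
  have hrad : ∀ t, radial (γ t) < (γ t 0) ^ α := by
    intro t
    rcases le_total t (1/2) with ht | ht
    · rw [hγr, hγ0c, hfst t ht]
      simp only [zero_mul, add_zero]
      nlinarith [hnn1 t]
    · rw [hγr, hsnd t ht]
      simpa using Real.rpow_pos_of_pos (hXpos t) α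
  have hz : x • e + offAxis z = z := by
    ext i
    by_cases hi : i = 0
    · subst hi; simp [he, offAxis_zero, hx]
    · simp [he, offAxis_ne _ hi, hi]
  have hmem : qhDist (cuspDomain n α) z (EuclideanSpace.single (0 : Fin n) (1/3 : ℝ)) ≤
      ∫ t in (0:ℝ)..1, ‖deriv γ t‖ / Metric.infDist (γ t) (frontier (cuspDomain n α)) := by
    apply csInf_le
    · refine ⟨0, ?_⟩
      rintro L ⟨g, -, -, -, -, rfl⟩
      exact intervalIntegral.integral_nonneg zero_le_one
        fun t _ => div_nonneg (norm_nonneg _) infDist_nonneg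
    · refine ⟨γ, hγlip, ?_, ?_, ?_, rfl⟩
      · simp only [hγ]
        rw [hfst 0 (by norm_num), hc1v 0 le_rfl (by norm_num)]
        simpa using hz
      · simp only [hγ]
        rw [hsnd 1 (by norm_num), hc2v 1 (by norm_num) le_rfl]
        ext i
        simp [he]
        split_ifs <;> ring
      · intro t _
        exact ⟨hXpos t, by linarith [hXle t], hrad t⟩
  refine hmem.trans ?_
  set f : ℝ → ℝ := fun t => ‖deriv γ t‖ / Metric.infDist (γ t) (frontier (cuspDomain n α))
    with hf
  have hf0 : ∀ t, 0 ≤ f t := fun t => div_nonneg (norm_nonneg _) infDist_nonneg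
  have hfle : ∀ t, f t ≤ (1 + α) * ‖deriv γ t‖ / ((γ t 0) ^ α - radial (γ t)) := fun t =>
    div_infDist_le hα (γ t) (hXpos t) (hXle t) (hrad t) _ (norm_nonneg _)
  -- first piece
  have hI1 : ∫ t in (0:ℝ)..(1/2), f t ≤
      (1 + α) * (Real.log (x ^ α) - Real.log (x ^ α - r)) := by
    have hpos : ∀ t ∈ Icc (0:ℝ) (1/2), 0 < x ^ α - (1 - 2 * t) * r := by
      intro t ht
      nlinarith [mul_nonneg ht.1 hr0]
    have key := integral_le_of_deriv_bound (f := f)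
      (F := fun t => (1 + α) * Real.log (x ^ α - (1 - 2 * t) * r))
      (g := fun t => (1 + α) * ((2 * r) / (x ^ α - (1 - 2 * t) * r)))
      (a := 0) (b := 1/2) (by norm_num) ?_ ?_ hf0 ?_
    · refine key.trans (le_of_eq ?_)
      norm_num
      ring
    · intro t ht
      have hd : HasDerivAt (fun t : ℝ => x ^ α - (1 - 2 * t) * r) (2 * r) t := by
        have := (((((hasDerivAt_id t).const_mul 2).const_sub 1).mul_const r).const_sub (x ^ α))
        simpa using this
      exact (hd.log (hpos t ht).ne').const_mul _
    · apply ContinuousOn.mul continuousOn_const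
      apply ContinuousOn.div continuousOn_const (by fun_prop)
      exact fun t ht => (hpos t ht).ne'
    · intro t ht
      have hder : HasDerivAt γ ((-2 : ℝ) • offAxis z) t := by
        have hd : HasDerivAt (fun t : ℝ => x • e + (1 - 2 * t) • offAxis z)
            ((-2 : ℝ) • offAxis z) t := by
          have := ((((hasDerivAt_id t).const_mul 2).const_sub 1).smul_const
            (offAxis z)).const_add (x • e)
          simpa using this
        refine hd.congr_of_eventuallyEq ?_
        filter_upwards [Ioo_mem_nhds ht.1 ht.2] with s hs
        simp only [hγ]
        rw [hfst s hs.2.le, hc1v s hs.1.le hs.2.le]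
        simp
      have h := hfle t
      rw [hder.deriv, hγ0c, hγr, hfst t ht.2.le, hc1v t ht.1.le ht.2.le, norm_smul,
        ← radial_eq_norm] at h
      refine h.trans (le_of_eq ?_)
      rw [Real.norm_eq_abs]
      norm_num
      ring
  -- second piece
  have hI2 : ∫ t in (1/2:ℝ)..1, f t ≤
      (1 + α) / (α - 1) * (x ^ (1 - α) + (1/3 : ℝ) ^ (1 - α)) := by
    obtain ⟨σ, hσ, hσ1⟩ : ∃ σ : ℝ, |1/3 - x| = σ * (1/3 - x) ∧ |σ| ≤ 1 := by
      rcases le_total 0 (1/3 - x) with h | h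
      · exact ⟨1, by rw [abs_of_nonneg h, one_mul], by simp⟩
      · exact ⟨-1, by rw [abs_of_nonpos h]; ring, by simp⟩
    have hpos : ∀ t ∈ Icc (1/2:ℝ) 1, 0 < x + (2 * t - 1) * (1/3 - x) := by
      intro t ht
      nlinarith [ht.1, ht.2]
    have hα1 : 0 < α - 1 := by linarith
    have key := integral_le_of_deriv_bound (f := f)
      (F := fun t => (-(σ * ((1 + α) / (α - 1)))) *
        (x + (2 * t - 1) * (1/3 - x)) ^ (1 - α))
      (g := fun t => (-(σ * ((1 + α) / (α - 1)))) * ((2 * (1/3 - x)) * (1 - α) *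
        (x + (2 * t - 1) * (1/3 - x)) ^ (1 - α - 1)))
      (a := 1/2) (b := 1) (by norm_num) ?_ ?_ hf0 ?_
    · refine key.trans ?_
      have e1 : x + (2 * 1 - 1) * (1/3 - x) = 1/3 := by ring
      have e2 : x + (2 * (1/2) - 1) * (1/3 - x) = x := by ring
      simp only [e1, e2]
      have p1 : 0 < x ^ (1 - α) := Real.rpow_pos_of_pos h0 _
      have p2 : 0 < (1/3 : ℝ) ^ (1 - α) := Real.rpow_pos_of_pos (by norm_num) _
      have p3 : 0 < (1 + α) / (α - 1) := by apply div_pos <;> linarith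
      have s1 := (abs_le.1 hσ1).1
      have s2 := (abs_le.1 hσ1).2
      have : σ * (x ^ (1 - α) - (1/3 : ℝ) ^ (1 - α)) ≤ x ^ (1 - α) + (1/3 : ℝ) ^ (1 - α) := by
        nlinarith
      have := mul_le_mul_of_nonneg_left this p3.le
      nlinarith
    · intro t ht
      have hd : HasDerivAt (fun t : ℝ => x + (2 * t - 1) * (1/3 - x)) (2 * (1/3 - x)) t := by
        have := ((((hasDerivAt_id t).const_mul 2).sub_const 1).mul_const (1/3 - x)).const_add x
        simpa using this
      exact (hd.rpow_const (Or.inl (hpos t ht).ne')).const_mul _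
    · apply ContinuousOn.mul continuousOn_const
      apply ContinuousOn.mul continuousOn_const
      apply ContinuousOn.rpow_const (by fun_prop)
      exact fun t ht => Or.inl (hpos t ht).ne'
    · intro t ht
      have hder : HasDerivAt γ ((2 * (1/3 - x)) • e) t := by
        have hd : HasDerivAt (fun t : ℝ => (x + (2 * t - 1) * (1/3 - x)) • e)
            ((2 * (1/3 - x)) • e) t := by
          have := (((((hasDerivAt_id t).const_mul 2).sub_const 1).mul_const
            (1/3 - x)).const_add x).smul_const e
          simpa using this
        refine hd.congr_of_eventuallyEq ?_
        filter_upwards [Ioo_mem_nhds ht.1 ht.2] with s hs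
        simp only [hγ]
        rw [hsnd s hs.1.le, hc2v s hs.1.le hs.2.le]
        simp
      have hen : ‖e‖ = 1 := by simp [he]
      have h := hfle t
      rw [hder.deriv, hγ0c, hγr, hsnd t ht.1.le, hc2v t ht.1.le ht.2.le, norm_smul, hen,
        Real.norm_eq_abs, abs_mul, hσ, abs_of_pos (by norm_num : (0:ℝ) < 2)] at h
      refine h.trans (le_of_eq ?_)
      have hX := hpos t ⟨ht.1.le, ht.2.le⟩
      rw [show 1 - α - 1 = -α by ring, Real.rpow_neg hX.le]
      have := Real.rpow_pos_of_pos hX α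
      rw [sub_self, zero_mul, sub_zero]
      field_simp
      ring
  by_cases hint : IntervalIntegrable f volume 0 1
  · rw [← intervalIntegral.integral_add_adjacent_intervals (b := 1/2)
      (hint.mono_set (by rw [uIcc_of_le, uIcc_of_le] <;> norm_num; exact Icc_subset_Icc le_rfl (by norm_num)))
      (hint.mono_set (by rw [uIcc_of_le, uIcc_of_le] <;> norm_num; exact Icc_subset_Icc (by norm_num) le_rfl))]
    exact add_le_add hI1 hI2
  · rw [intervalIntegral.integral_undef hint]
    have n1 : 0 ≤ ∫ t in (0:ℝ)..(1/2), f t :=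
      intervalIntegral.integral_nonneg (by norm_num) fun t _ => hf0 t
    have n2 : 0 ≤ ∫ t in (1/2:ℝ)..1, f t :=
      intervalIntegral.integral_nonneg (by norm_num) fun t _ => hf0 t
    linarith

/-- With base point `z₀ = (1/3, 0, …, 0)`, every `z ∈ S_{j,m}`
satisfies `k(z, z₀; Ω_α) ≤ C(α)·(1 + ℓ)·2^{(α−1)j}`, where `ℓ = ⌊log₂ m⌋ + 1`. -/
theorem cuspCell_qh_upper_bound (n : ℕ) [NeZero n] (hn : 2 ≤ n) (α : ℝ) (hα : 1 < α) :
    ∃ C : ℝ, 0 < C ∧ ∀ j m : ℕ, 1 ≤ j → 1 ≤ m →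
      ∀ z ∈ cuspCell n α j m,
        qhDist (cuspDomain n α) z (EuclideanSpace.single (0 : Fin n) (1/3 : ℝ)) ≤
          C * (1 + (Nat.log 2 m + 1 : ℕ)) * (2 : ℝ) ^ ((α - 1) * j) := by
  have hα1 : 0 < α - 1 := by linarith
  set A : ℝ := (2:ℝ) ^ (α - 1) + (1/3 : ℝ) ^ (1 - α) with hA
  have hA0 : 0 < A := by positivity
  refine ⟨(1 + α) * 1 + (1 + α) / (α - 1) * A, by positivity, ?_⟩
  intro j m hj hm z hz
  obtain ⟨hz1, hz2, -, hz4⟩ := hz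
  set ℓ := Nat.log 2 m + 1 with hℓ
  have hm1 : (2:ℝ) ^ ℓ ≤ 2 * m := by
    have := Nat.pow_log_le_self 2 (show m ≠ 0 by omega)
    have h' : 2 ^ ℓ ≤ 2 * m := by rw [hℓ, pow_succ]; omega
    exact_mod_cast h'
  have hm2 : (m:ℝ) + 1 ≤ 2 ^ ℓ := by
    have := Nat.lt_pow_succ_log_self (b := 2) (by norm_num) m
    have h' : m + 1 ≤ 2 ^ ℓ := this
    exact_mod_cast h'
  have hP : (0:ℝ) < 2 ^ ℓ := by positivity
  have hQ : (0:ℝ) < 2 ^ j := by positivity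
  have hQ2 : (2:ℝ) ≤ 2 ^ j := by
    calc (2:ℝ) = 2 ^ 1 := by norm_num
      _ ≤ 2 ^ j := pow_le_pow_right₀ (by norm_num) hj
  have hxl : 1 / (2 * 2 ^ j) ≤ z 0 := by
    refine le_trans ?_ hz1
    rw [pow_add, div_le_div_iff₀ (by positivity) (by positivity)]
    nlinarith
  have hxu : z 0 ≤ 1 / 2 := by
    refine hz2.trans ?_
    rw [pow_add, div_le_div_iff₀ (by positivity) (by positivity)]
    nlinarith
  have h0 : 0 < z 0 := lt_of_lt_of_le (by positivity) hxl
  have hxp : 0 < (z 0) ^ α := Real.rpow_pos_of_pos h0 _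
  have hgap : z 0 ^ α / 2 ^ ℓ ≤ z 0 ^ α - radial z := by
    have : (1 - 1 / 2 ^ ℓ) * z 0 ^ α = z 0 ^ α - z 0 ^ α / 2 ^ ℓ := by ring
    linarith
  have hgp : 0 < z 0 ^ α / 2 ^ ℓ := by positivity
  have hmain := qhDist_le hα z h0 hxu (by linarith)
  have hlog : Real.log (z 0 ^ α) - Real.log (z 0 ^ α - radial z) ≤ ℓ := by
    have h1 := Real.log_le_log hgp hgap
    rw [Real.log_div hxp.ne' hP.ne', Real.log_pow] at h1
    have h2 : Real.log 2 ≤ 1 := by linarith [Real.log_two_lt_d9]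
    have : (ℓ:ℝ) * Real.log 2 ≤ ℓ * 1 := by gcongr
    linarith
  set B : ℝ := (2:ℝ) ^ ((α - 1) * j) with hB
  have hB1 : 1 ≤ B := Real.one_le_rpow (by norm_num) (by positivity)
  have hpow : (z 0) ^ (1 - α) ≤ 2 ^ (α - 1) * B := by
    calc (z 0) ^ (1 - α) ≤ (1 / (2 * 2 ^ j)) ^ (1 - α) :=
          Real.rpow_le_rpow_of_nonpos (by positivity) hxl (by linarith)
      _ = (2 * 2 ^ j) ^ (α - 1) := by
          rw [one_div, Real.inv_rpow (by positivity), ← Real.rpow_neg (by positivity)]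
          congr 1; ring
      _ = _ := by
          rw [Real.mul_rpow (by norm_num) (by positivity), hB, mul_comm (α - 1),
            Real.rpow_mul (by norm_num), Real.rpow_natCast]
  have hp3 : (0:ℝ) < (1/3 : ℝ) ^ (1 - α) := by positivity
  have hsum : (z 0) ^ (1 - α) + (1/3 : ℝ) ^ (1 - α) ≤ A * B := by
    rw [hA]; nlinarith
  have hl0 : (0:ℝ) ≤ (ℓ:ℝ) := by positivity
  have hD : 0 < (1 + α) / (α - 1) := by positivity
  have t1 : (1 + α) * (Real.log (z 0 ^ α) - Real.log (z 0 ^ α - radial z)) ≤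
      (1 + α) * 1 * (1 + ℓ) * B := by
    have : Real.log (z 0 ^ α) - Real.log (z 0 ^ α - radial z) ≤ (1 + ℓ) * B := by nlinarith
    have := mul_le_mul_of_nonneg_left this (show 0 ≤ 1 + α by linarith)
    linarith
  have t2 : (1 + α) / (α - 1) * ((z 0) ^ (1 - α) + (1/3 : ℝ) ^ (1 - α)) ≤
      (1 + α) / (α - 1) * A * (1 + ℓ) * B := by
    have h1 : (z 0) ^ (1 - α) + (1/3 : ℝ) ^ (1 - α) ≤ A * (1 + ℓ) * B := by
      have : 0 ≤ A * B * ℓ := by positivity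
      nlinarith
    have := mul_le_mul_of_nonneg_left h1 hD.le
    linarith
  calc _ ≤ _ := hmain
    _ ≤ _ := add_le_add t1 t2
    _ = _ := by ring
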